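/- arXiv:2205.00881 — 3 statements merged into one kernel-verified Lean document; each statement's English description precedes it below -/
import Mathlib

section
/- Majority dynamics preserves UnanDom-consensus identity: if a is the UnanDom-consensus alternative of a profile P, then for every update order σ, a is the UnanDom-consensus alternative of MD_σ(P). -/
attribute [local instance] Classical.propDecidable

noncomputable section

/-- A preference over the set of alternatives `A`: a binary relation. -/
abbrev Pref (A : Type) := A → A → Prop

/-- A preference is a strict partial order: irreflexive and transitive. -/
def IsPref {A : Type} (pref : Pref A) : Prop :=
  Irreflexive pref ∧ Transitive pref

variable {A : Type} [Fintype A] [DecidableEq A]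

/-- The support `n_P(ab)`: the number of agents preferring `a` to `b` in profile `P`. -/
def support {n : ℕ} (P : Fin n → Pref A) (a b : A) : ℕ :=
  (Finset.univ.filter fun i => P i a b).card

/-- An update order: a list of ordered pairs of distinct alternatives containing,
for each unordered pair `{a, b}` of distinct alternatives, exactly one of `ab` or `ba`,
each exactly once. -/
def IsUpdateOrder (σ : List (A × A)) : Prop :=
  (∀ p ∈ σ, p.1 ≠ p.2) ∧
  (∀ a b : A, a ≠ b → σ.count (a, b) + σ.count (b, a) = 1)

/-- One step of majority dynamics, discussing the pair `p`: agents already ranking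
`p.1` versus `p.2` keep their preference; every other agent adds `p.1 ≻ p.2` if
`n_P(p.1 p.2) ≥ n_P(p.2 p.1)` (ties broken in favour of the first alternative of the
pair), and otherwise adds `p.2 ≻ p.1`, then takes the transitive closure. -/
def mdStep {n : ℕ} (P : Fin n → Pref A) (p : A × A) : Fin n → Pref A :=
  fun i =>
    if P i p.1 p.2 ∨ P i p.2 p.1 then P i
    else if support P p.2 p.1 ≤ support P p.1 p.2 then
      Relation.TransGen (fun x y => P i x y ∨ (x = p.1 ∧ y = p.2))
    else
      Relation.TransGen (fun x y => P i x y ∨ (x = p.2 ∧ y = p.1))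

/-- Majority dynamics `MD_σ(P)`: process the pairs of the update order `σ` in order. -/
def MD {n : ℕ} (σ : List (A × A)) (P : Fin n → Pref A) : Fin n → Pref A :=
  σ.foldl mdStep P

/-- `a` is a Condorcet winner in `P`. -/
def CondorcetWinner {n : ℕ} (P : Fin n → Pref A) (a : A) : Prop :=
  ∀ b, b ≠ a → support P b a < support P a b

/-- `a` is a Condorcet loser in `P`. -/
def CondorcetLoser {n : ℕ} (P : Fin n → Pref A) (a : A) : Prop :=
  ∀ b, b ≠ a → support P a b < support P b a

/-- `a` is undominated in a preference. -/
def Undominated {A : Type} (pref : Pref A) (a : A) : Prop := ∀ b, ¬ pref b a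

/-- `a` is dominant in a preference. -/
def Dominant {A : Type} (pref : Pref A) (a : A) : Prop := ∀ b, b ≠ a → pref a b

/-- `a` is dominated (by every other alternative) in a preference. -/
def DominatedIn {A : Type} (pref : Pref A) (a : A) : Prop := ∀ b, b ≠ a → pref b a

/-- Number of preferences of `P` in which `a` is undominated. -/
def udCount {n : ℕ} (P : Fin n → Pref A) (a : A) : ℕ :=
  (Finset.univ.filter fun i => Undominated (P i) a).card

/-- Number of preferences of `P` in which `a` is dominant. -/
def domCount {n : ℕ} (P : Fin n → Pref A) (a : A) : ℕ :=
  (Finset.univ.filter fun i => Dominant (P i) a).card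

/-- Number of preferences of `P` in which `a` is dominated. -/
def domdCount {n : ℕ} (P : Fin n → Pref A) (a : A) : ℕ :=
  (Finset.univ.filter fun i => DominatedIn (P i) a).card

/-- `a` is undominated in at least one preference and no alternative is undominated
in strictly more preferences than `a`. -/
def PlurUDTop {n : ℕ} (P : Fin n → Pref A) (a : A) : Prop :=
  0 < udCount P a ∧ ∀ b, udCount P b ≤ udCount P a

/-- `a` is the PlurUD-consensus alternative of `P`. -/
def PlurUDConsensus {n : ℕ} (P : Fin n → Pref A) (a : A) : Prop :=
  PlurUDTop P a ∧ ∀ b, PlurUDTop P b → b = a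

/-- `a` is dominant in at least one preference and no alternative is dominant
in strictly more preferences than `a`. -/
def PlurDomTop {n : ℕ} (P : Fin n → Pref A) (a : A) : Prop :=
  0 < domCount P a ∧ ∀ b, domCount P b ≤ domCount P a

/-- `a` is the PlurDom-consensus alternative of `P`. -/
def PlurDomConsensus {n : ℕ} (P : Fin n → Pref A) (a : A) : Prop :=
  PlurDomTop P a ∧ ∀ b, PlurDomTop P b → b = a

/-- `a` is dominated in at least one preference and no alternative is dominated
in strictly more preferences than `a`. -/
def PlurDomdTop {n : ℕ} (P : Fin n → Pref A) (a : A) : Prop :=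
  0 < domdCount P a ∧ ∀ b, domdCount P b ≤ domdCount P a

/-- `a` is the (unique) plurality dominated alternative of `P`. -/
def PlurDomdConsensus {n : ℕ} (P : Fin n → Pref A) (a : A) : Prop :=
  PlurDomdTop P a ∧ ∀ b, PlurDomdTop P b → b = a

/-- `a` is the MajUD-consensus alternative of `P`: undominated in strictly more than
`n / 2` of the preferences, and the unique alternative with this property. -/
def MajUDConsensus {n : ℕ} (P : Fin n → Pref A) (a : A) : Prop :=
  (n < 2 * udCount P a) ∧ ∀ b, n < 2 * udCount P b → b = a

/-- `a` is the MajDom-consensus alternative of `P`: dominant in strictly more than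
`n / 2` of the preferences (such an alternative is automatically unique). -/
def MajDomConsensus {n : ℕ} (P : Fin n → Pref A) (a : A) : Prop :=
  n < 2 * domCount P a

/-- `a` is the UnanUD-consensus alternative of `P`: undominated in every preference,
and the unique alternative with this property. -/
def UnanUDConsensus {n : ℕ} (P : Fin n → Pref A) (a : A) : Prop :=
  (∀ i, Undominated (P i) a) ∧ ∀ b, (∀ i, Undominated (P i) b) → b = a

/-- `a` is the UnanDom-consensus alternative of `P`: dominant in every preference. -/
def UnanDomConsensus {n : ℕ} (P : Fin n → Pref A) (a : A) : Prop :=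
  ∀ i, Dominant (P i) a

/-- A preference is a strict weak ordering: there is an ordered partition of the
alternatives into levels (given by a level function `f`) such that alternatives in the
same level are incomparable, and `a ≻ b` exactly when `a` is in an earlier level. -/
def IsSWO (pref : Pref A) : Prop :=
  ∃ (k : ℕ) (f : A → Fin k), ∀ a b : A, pref a b ↔ f a < f b

theorem Dominant.mono {A : Type} {r s : Pref A} {a : A} (ha : Dominant r a) (hrs : r ≤ s) :
    Dominant s a :=
  fun b hb => hrs a b (ha b hb)

theorem UnanDomConsensus.mono {A : Type} {n : ℕ} {P Q : Fin n → Pref A} {a : A}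
    (ha : UnanDomConsensus P a) (hPQ : P ≤ Q) : UnanDomConsensus Q a :=
  fun i => (ha i).mono (hPQ i)

theorem le_mdStep {A : Type} {n : ℕ} (P : Fin n → Pref A) (p : A × A) : P ≤ mdStep P p := by
  intro i x y hxy
  unfold mdStep
  split_ifs
  · exact hxy
  · exact .single (.inl hxy)
  · exact .single (.inl hxy)

theorem le_md {A : Type} {n : ℕ} (σ : List (A × A)) (P : Fin n → Pref A) : P ≤ MD σ P :=
  List.foldlRecOn σ mdStep le_rfl fun Q hPQ p _ => hPQ.trans (le_mdStep Q p)

theorem stmt_7_general {A : Type} {n : ℕ} (P : Fin n → Pref A) (a : A)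
    (ha : UnanDomConsensus P a) (σ : List (A × A)) : UnanDomConsensus (MD σ P) a :=
  ha.mono (le_md σ P)

/-- Majority dynamics preserves UnanDom-consensus identity. -/
theorem stmt_7 {n : ℕ} (P : Fin n → Pref A) (hP : ∀ i, IsPref (P i))
    (a : A) (ha : UnanDomConsensus P a)
    (σ : List (A × A)) (hσ : IsUpdateOrder σ) :
    UnanDomConsensus (MD σ P) a :=
  stmt_7_general P a ha σ

end
end

section
/- For every m ≥ 5 there exist a profile P over m alternatives that has a Condorcet winner and in which some alternative ℓ is a Condorcet loser, and an update order σ, such that ℓ is the Condorcet winner of MD_σ(P). -/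
attribute [local instance] Classical.propDecidable

noncomputable section

variable {A : Type} [Fintype A] [DecidableEq A]

/-!
Five agents suffice, and only three alternatives matter: the Condorcet loser `l`, the Condorcet
winner `w` and any third one, `x`. Discussing `w` versus `x` first, `w` wins, and the only agent
not ranking the two, who puts `l` above `w` and `x` above the rest, now has `l` on top. That extra
vote lets `l` tie with `x`, so `l` wins the contest `(l, x)`, and an agent with `x` above everything
but `l` gets `l` on top. Now `l` also ties with `w` and wins `(l, w)`, which moves `l` to the top of
an agent with `w` above everything but `l`. Preferences only grow, so whatever is discussed next,
three agents out of five keep `l` on top.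
-/

section General

variable {α : Type} {n : ℕ} {P : Fin n → Pref α} {R : Pref α} {a b c d : α} {i : Fin n}

open Relation

lemma IsPref.asymm (hR : IsPref R) (hab : R a b) : ¬ R b a :=
  fun hba => hR.1 a (hR.2 hab hba)

lemma IsPref.isTrans (hR : IsPref R) : IsTrans α R := ⟨fun _ _ _ hab hbc => hR.2 hab hbc⟩

lemma rel_or_of_transGen_or_pair [IsTrans α R]
    (h : TransGen (fun x y => R x y ∨ (x = a ∧ y = b)) c d) :
    R c d ∨ ((c = a ∨ R c a) ∧ (b = d ∨ R b d)) := by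
  induction h with
  | single h => grind
  | @tail y z _ hyz ih =>
    rcases ih, hyz with ⟨hcy | ⟨hca, hby⟩, hyz | ⟨rfl, rfl⟩⟩
    · exact .inl (_root_.trans hcy hyz)
    · exact .inr ⟨.inr hcy, .inl rfl⟩
    · exact .inr ⟨hca, .inr (hby.elim (fun h => h ▸ hyz) (_root_.trans · hyz))⟩
    · exact .inr ⟨hca, .inl rfl⟩

lemma IsPref.transGen_or_pair (hR : IsPref R) (hab : a ≠ b) (hba : ¬ R b a) :
    IsPref (TransGen fun x y => R x y ∨ (x = a ∧ y = b)) := by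
  have := hR.isTrans
  refine ⟨fun c hc => ?_, fun _ _ _ => TransGen.trans⟩
  rcases rel_or_of_transGen_or_pair hc with hcc | ⟨rfl | hca, rfl | hbc⟩
  · exact hR.1 c hcc
  · exact hab rfl
  · exact hba hbc
  · exact hba hca
  · exact hba (hR.2 hbc hca)

lemma isPref_mdStep (hab : a ≠ b) (hP : IsPref (P i)) : IsPref (mdStep P (a, b) i) := by
  unfold mdStep
  split_ifs with hranked
  · exact hP
  · exact hP.transGen_or_pair hab fun h => hranked (.inr h)
  · exact hP.transGen_or_pair hab.symm fun h => hranked (.inl h)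

lemma mdStep_of_rel {p : α × α} (h : P i a b) : mdStep P p i a b := by
  unfold mdStep
  split_ifs
  · exact h
  · exact .single (.inl h)
  · exact .single (.inl h)

lemma mdStep_eq_of_ranked (h : P i a b ∨ P i b a) : mdStep P (a, b) i = P i :=
  if_pos h

lemma mdStep_of_support_le (hmaj : support P b a ≤ support P a b) (hba : ¬ P i b a) :
    mdStep P (a, b) i a b := by
  unfold mdStep
  split_ifs with hranked
  · exact hranked.resolve_right hba
  · exact .single (.inr ⟨rfl, rfl⟩)

lemma Undominated.mdStep (hc : Undominated (P i) c) (hcb : c ≠ b)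
    (hmaj : support P b a ≤ support P a b) : Undominated (mdStep P (a, b) i) c := by
  intro d hd
  unfold _root_.mdStep at hd
  split_ifs at hd
  · exact hc d hd
  · obtain ⟨e, -, hec | ⟨-, hcb'⟩⟩ := TransGen.tail'_iff.1 hd
    · exact hc e hec
    · exact hcb hcb'

lemma isPref_MD {σ : List (α × α)} (hσ : ∀ p ∈ σ, p.1 ≠ p.2) (hP : IsPref (P i)) :
    IsPref (MD σ P i) := by
  induction σ generalizing P with
  | nil => exact hP
  | cons p σ ih =>
    rw [List.forall_mem_cons] at hσ
    exact ih hσ.2 (isPref_mdStep hσ.1 hP)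

lemma MD_of_rel (σ : List (α × α)) (h : P i a b) : MD σ P i a b := by
  induction σ generalizing P with
  | nil => exact h
  | cons p _ ih => exact ih (mdStep_of_rel h)

lemma MD_append (σ τ : List (α × α)) : MD (σ ++ τ) P = MD τ (MD σ P) :=
  List.foldl_append

lemma card_le_support {S : Finset (Fin n)} (hS : ∀ i ∈ S, P i a b) : S.card ≤ support P a b :=
  Finset.card_le_card fun i hi => by simpa using hS i hi

lemma support_le_card {S : Finset (Fin n)} (hS : ∀ i, P i a b → i ∈ S) :
    support P a b ≤ S.card :=
  Finset.card_le_card fun i hi => hS i (by simpa using hi)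

lemma support_le_support_of_card_le (S T : Finset (Fin n)) (hST : S.card ≤ T.card)
    (hS : ∀ i, P i a b → i ∈ S) (hT : ∀ i ∈ T, P i c d) : support P a b ≤ support P c d :=
  (support_le_card hS).trans (hST.trans (card_le_support hT))

lemma support_lt_support_of_card_lt (S T : Finset (Fin n)) (hST : S.card < T.card)
    (hS : ∀ i, P i a b → i ∈ S) (hT : ∀ i ∈ T, P i c d) : support P a b < support P c d :=
  (support_le_card hS).trans_lt (hST.trans_le (card_le_support hT))

lemma dominant_of_rel [IsTrans α R] (hac : R a c) (hc : ∀ b, b ≠ a → b ≠ c → R c b) :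
    Dominant R a := by
  intro b hba
  obtain rfl | hbc := eq_or_ne b c
  · exact hac
  · exact _root_.trans hac (hc b hba hbc)

lemma MajDomConsensus.condorcetWinner (hP : ∀ i, IsPref (P i)) (ha : MajDomConsensus P a) :
    CondorcetWinner P a := by
  intro b hba
  have hfor : domCount P a ≤ support P a b :=
    card_le_support fun i hi => (Finset.mem_filter.1 hi).2 b hba
  have hdisjoint : support P b a + domCount P a ≤ n := by
    rw [support, domCount, ← Finset.card_union_of_disjoint]
    · exact card_finset_fin_le _
    · rw [Finset.disjoint_filter]
      exact fun i _ hi hdom => (hP i).asymm hi (hdom b hba)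
  have hmaj : n < 2 * domCount P a := ha
  omega

lemma exists_isUpdateOrder_append [Finite α] [DecidableEq α] {σ : List (α × α)}
    (hne : ∀ p ∈ σ, p.1 ≠ p.2)
    (hσ : ∀ a b, a ≠ b → σ.count (a, b) + σ.count (b, a) ≤ 1) :
    ∃ τ, IsUpdateOrder (σ ++ τ) := by
  have := Fintype.ofFinite α
  let e := Fintype.equivFin α
  let τ : List (α × α) := (Finset.univ.filter fun p : α × α =>
    e p.1 < e p.2 ∧ σ.count p + σ.count p.swap = 0).toList
  have hmem (p : α × α) : p ∈ τ ↔ e p.1 < e p.2 ∧ σ.count p + σ.count p.swap = 0 := by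
    simp [τ]
  have hcount (p : α × α) :
      τ.count p = if e p.1 < e p.2 ∧ σ.count p + σ.count p.swap = 0 then 1 else 0 := by
    rw [(Finset.nodup_toList _).count]
    exact if_congr (hmem p) rfl rfl
  refine ⟨τ, fun p hp => ?_, fun a b hab => ?_⟩
  · rcases List.mem_append.1 hp with hpσ | hpτ
    · exact hne p hpσ
    · exact fun h => ((hmem p).1 hpτ).1.ne (congrArg e h)
  · have hle := hσ a b hab
    have hlt : e a < e b ∨ e b < e a := lt_or_gt_of_ne (e.injective.ne hab)
    simp only [List.count_append, hcount, Prod.swap_prod_mk]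
    split_ifs <;> omega

end General

section Upset

variable {α : Type} {l w x : α}

/-- Five agents who make `l` the Condorcet loser and `w` the Condorcet winner, but such that one
agent more comes to rank `l` first after each of the contests `w` versus `x`, `l` versus `x` and
`l` versus `w`. With `z` running over all other alternatives, the agents hold
`0`: `l ≻ w` and `x ≻ z`; `1`: `w ≻ x, z ≻ l`; `2`: `w ≻ l, x, z`; `3`: `x ≻ w, z`;
`4`: `w ≻ x, z`. -/
def upsetProfile (l w x : α) : Fin 5 → Pref α
  | 0 => fun a b => (a = l ∧ b = w) ∨ (a = x ∧ b ≠ l ∧ b ≠ w ∧ b ≠ x)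
  | 1 => fun a b => (a = w ∨ b = l) ∧ a ≠ l ∧ b ≠ w
  | 2 => fun a b => a = w ∧ b ≠ w
  | 3 => fun a b => a = x ∧ b ≠ l ∧ b ≠ x
  | 4 => fun a b => a = w ∧ b ≠ l ∧ b ≠ w

local notation "P₀" => upsetProfile l w x
local notation "P₁" => mdStep P₀ (w, x)
local notation "P₂" => mdStep P₁ (l, x)
local notation "P₃" => mdStep P₂ (l, w)

lemma isPref_upsetProfile (hlw : l ≠ w) (hwx : w ≠ x) (i : Fin 5) : IsPref (P₀ i) := by
  constructor
  · intro a
    fin_cases i <;> grind [upsetProfile]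
  · intro a b c
    fin_cases i <;> grind [upsetProfile]

lemma condorcetWinner_upsetProfile (hlw : l ≠ w) (hlx : l ≠ x) : CondorcetWinner P₀ w := by
  intro b hb
  obtain rfl | hbl := eq_or_ne b l
  · refine support_lt_support_of_card_lt {0} {1, 2} (by decide) (fun i => ?_) ?_
    · fin_cases i <;> simp [upsetProfile, hlw, hlx]
    · simp [upsetProfile, hlw, hlw.symm]
  · refine support_lt_support_of_card_lt {3} {1, 2} (by decide) (fun i => ?_) ?_
    · fin_cases i <;> simp [upsetProfile, hlw.symm, hbl, hb]
    · simp [upsetProfile, hlw.symm, hb]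

lemma condorcetLoser_upsetProfile (hlw : l ≠ w) (hlx : l ≠ x) : CondorcetLoser P₀ l := by
  intro b hb
  obtain rfl | hbw := eq_or_ne b w
  · exact condorcetWinner_upsetProfile hlw hlx l hlw
  · refine support_lt_support_of_card_lt ∅ {1} (by decide) (fun i => ?_) ?_
    · fin_cases i <;> simp [upsetProfile, hlw, hlx, hbw]
    · simp [upsetProfile, hlw, hb]

lemma support_xw_le_support_wx (hlw : l ≠ w) (hlx : l ≠ x) (hwx : w ≠ x) :
    support P₀ x w ≤ support P₀ w x :=
  (condorcetWinner_upsetProfile hlw hlx x hwx.symm).le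

lemma undominated_upsetProfile (hlw : l ≠ w) :
    ∀ i ∈ ({0, 3, 4} : Finset (Fin 5)), Undominated (P₀ i) l := by
  simp [Undominated, upsetProfile, hlw]

lemma undominated_after_wx (hlw : l ≠ w) (hlx : l ≠ x) (hwx : w ≠ x) :
    ∀ i ∈ ({0, 3, 4} : Finset (Fin 5)), Undominated (P₁ i) l :=
  fun i hi => (undominated_upsetProfile hlw i hi).mdStep hlx
    (support_xw_le_support_wx hlw hlx hwx)

lemma dominant_after_wx (hlw : l ≠ w) (hlx : l ≠ x) (hwx : w ≠ x) : Dominant (P₁ 0) l := by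
  have hpref : IsPref (P₁ 0) := isPref_mdStep hwx (isPref_upsetProfile hlw hwx 0)
  have hP₁lw : P₁ 0 l w := mdStep_of_rel (by simp [upsetProfile])
  have hP₁wx : P₁ 0 w x :=
    mdStep_of_support_le (support_xw_le_support_wx hlw hlx hwx) (by simp [upsetProfile, hlx.symm])
  have := hpref.isTrans
  refine dominant_of_rel hP₁lw fun b hbl hbw => ?_
  obtain rfl | hbx := eq_or_ne b x
  · exact hP₁wx
  · exact hpref.2 hP₁wx (mdStep_of_rel (by simp [upsetProfile, hbl, hbw, hbx]))

lemma support_xl_le_support_lx (hlw : l ≠ w) (hlx : l ≠ x) (hwx : w ≠ x) :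
    support P₁ x l ≤ support P₁ l x := by
  refine support_le_support_of_card_le {1} {0} (by decide) (fun i hxl => ?_) ?_
  · have hi : i ∉ ({0, 3, 4} : Finset (Fin 5)) :=
      fun hi => undominated_after_wx hlw hlx hwx i hi x hxl
    have hi_ne_two : i ≠ 2 := by
      rintro rfl
      rw [mdStep_eq_of_ranked (by simp [upsetProfile, hwx.symm])] at hxl
      simp [upsetProfile, hwx.symm] at hxl
    fin_cases i <;> simp_all
  · simpa using dominant_after_wx hlw hlx hwx x hlx.symm

lemma undominated_after_lx (hlw : l ≠ w) (hlx : l ≠ x) (hwx : w ≠ x) :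
    ∀ i ∈ ({0, 3, 4} : Finset (Fin 5)), Undominated (P₂ i) l :=
  fun i hi => (undominated_after_wx hlw hlx hwx i hi).mdStep hlx
    (support_xl_le_support_lx hlw hlx hwx)

lemma dominant_after_lx (hlw : l ≠ w) (hlx : l ≠ x) (hwx : w ≠ x) : Dominant (P₂ 3) l := by
  have hP₂lx : P₂ 3 l x := mdStep_of_support_le (support_xl_le_support_lx hlw hlx hwx)
    (undominated_after_wx hlw hlx hwx 3 (by simp) x)
  have := (isPref_mdStep hlx (isPref_mdStep hwx (isPref_upsetProfile hlw hwx 3))).isTrans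
  refine dominant_of_rel hP₂lx fun b hbl hbx => mdStep_of_rel (mdStep_of_rel ?_)
  simp [upsetProfile, hbl, hbx]

lemma support_wl_le_support_lw (hlw : l ≠ w) (hlx : l ≠ x) (hwx : w ≠ x) :
    support P₂ w l ≤ support P₂ l w := by
  refine support_le_support_of_card_le {1, 2} {0, 3} (by decide) (fun i hwl => ?_) ?_
  · have hi : i ∉ ({0, 3, 4} : Finset (Fin 5)) :=
      fun hi => undominated_after_lx hlw hlx hwx i hi w hwl
    fin_cases i <;> simp_all
  · simpa using ⟨mdStep_of_rel (dominant_after_wx hlw hlx hwx w hlw.symm),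
      dominant_after_lx hlw hlx hwx w hlw.symm⟩

lemma dominant_after_lw (hlw : l ≠ w) (hlx : l ≠ x) (hwx : w ≠ x) : Dominant (P₃ 4) l := by
  have hP₃lw : P₃ 4 l w := mdStep_of_support_le (support_wl_le_support_lw hlw hlx hwx)
    (undominated_after_lx hlw hlx hwx 4 (by simp) w)
  have := (isPref_mdStep hlw <| isPref_mdStep hlx <| isPref_mdStep hwx <|
    isPref_upsetProfile hlw hwx 4).isTrans
  refine dominant_of_rel hP₃lw fun b hbl hbw => mdStep_of_rel (mdStep_of_rel (mdStep_of_rel ?_))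
  simp [upsetProfile, hbl, hbw]

lemma majDomConsensus_MD_upsetProfile (hlw : l ≠ w) (hlx : l ≠ x) (hwx : w ≠ x)
    (τ : List (α × α)) : MajDomConsensus (MD ([(w, x), (l, x), (l, w)] ++ τ) P₀) l := by
  have hdom : ∀ i ∈ ({0, 3, 4} : Finset (Fin 5)), Dominant (P₃ i) l := by
    simp only [Finset.mem_insert, Finset.mem_singleton, forall_eq_or_imp, forall_eq]
    exact ⟨fun b hb => mdStep_of_rel (mdStep_of_rel (dominant_after_wx hlw hlx hwx b hb)),
      fun b hb => mdStep_of_rel (dominant_after_lx hlw hlx hwx b hb),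
      dominant_after_lw hlw hlx hwx⟩
  have hcard : ({0, 3, 4} : Finset (Fin 5)).card ≤
      domCount (MD ([(w, x), (l, x), (l, w)] ++ τ) P₀) l := by
    refine Finset.card_le_card fun i hi => ?_
    rw [Finset.mem_filter, MD_append]
    exact ⟨Finset.mem_univ i, fun b hb => MD_of_rel τ (hdom i hi b hb)⟩
  calc 5 < 2 * ({0, 3, 4} : Finset (Fin 5)).card := by decide
    _ ≤ 2 * domCount _ l := by gcongr

lemma exists_isUpdateOrder_upset_append [Finite α] [DecidableEq α] (hlw : l ≠ w) (hlx : l ≠ x)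
    (hwx : w ≠ x) : ∃ τ, IsUpdateOrder ([(w, x), (l, x), (l, w)] ++ τ) := by
  refine exists_isUpdateOrder_append (by simp [hlw, hlx, hwx]) fun a b _ => ?_
  simp only [List.count_cons, List.count_nil, beq_iff_eq, Prod.mk.injEq]
  grind

end Upset

theorem stmt_9_general {α : Type} [Fintype α] [DecidableEq α] (hα : 3 ≤ Fintype.card α) :
    ∃ (P : Fin 5 → Pref α) (w l : α) (σ : List (α × α)),
      (∀ i, IsPref (P i)) ∧ CondorcetWinner P w ∧ CondorcetLoser P l ∧
      IsUpdateOrder σ ∧ CondorcetWinner (MD σ P) l := by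
  obtain ⟨l, w, x, hlw, hlx, hwx⟩ := Fintype.two_lt_card_iff.1 hα
  obtain ⟨τ, hσ⟩ := exists_isUpdateOrder_upset_append hlw hlx hwx
  have hP := isPref_upsetProfile hlw hwx
  exact ⟨upsetProfile l w x, w, l, _, hP, condorcetWinner_upsetProfile hlw hlx,
    condorcetLoser_upsetProfile hlw hlx, hσ,
    (majDomConsensus_MD_upsetProfile hlw hlx hwx τ).condorcetWinner fun i => isPref_MD hσ.1 (hP i)⟩

/-- For every `m ≥ 5`, majority dynamics can turn a Condorcet loser
into the Condorcet winner. -/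
theorem stmt_9 (m : ℕ) (hm : 5 ≤ m) :
    ∃ (n : ℕ) (P : Fin n → Pref (Fin m)) (w l : Fin m) (σ : List (Fin m × Fin m)),
      (∀ i, IsPref (P i)) ∧ CondorcetWinner P w ∧ CondorcetLoser P l ∧
      IsUpdateOrder σ ∧ CondorcetWinner (MD σ P) l :=
  ⟨5, stmt_9_general (by rw [Fintype.card_fin]; omega)⟩

end
end

section
/- For profiles of strict weak orderings, majority dynamics preserves Condorcet-winner identity: if every preference in a profile P is a strict weak ordering and a is the Condorcet winner of P, then for every update order σ, a is the Condorcet winner of MD_σ(P). -/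
attribute [local instance] Classical.propDecidable

noncomputable section

variable {A : Type} [Fintype A] [DecidableEq A]

/-!
Discussing pairs never places a new alternative above the Condorcet winner `a` in any preference.
As long as this holds, the support of `ba` has not grown and that of `ab` has not shrunk, so `a` is
still a Condorcet winner and only pairs `xy` with `y ≠ a` are added. Adding such a pair could put a
new alternative above `a` only through a chain `x ≻ y ≻ a`. But then `y` was above `a` initially,
and `x`, being incomparable to `y`, was initially in the block of `y` or an earlier one, hence above
`a` as well.
-/

section

variable {α : Type} {n : ℕ}

theorem IsSWO.isOrderConnected {r : Pref α} (hr : IsSWO r) : IsOrderConnected α r := by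
  obtain ⟨k, f, hf⟩ := hr
  constructor
  intro x y z hxz
  simp only [hf] at hxz ⊢
  exact hxz.gt_or_lt (f y)

theorem support_le_support {P Q : Fin n → Pref α} {a b c d : α}
    (h : ∀ i, P i a b → Q i c d) : support P a b ≤ support Q c d :=
  Finset.card_le_card (Finset.monotone_filter_right _ fun i _ => h i)

theorem CondorcetWinner.ne_of_support_le {P : Fin n → Pref α} {a x y : α}
    (ha : CondorcetWinner P a) (hxy : x ≠ y) (hle : support P y x ≤ support P x y) : y ≠ a := by
  rintro rfl
  exact (ha x hxy).not_ge hle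

/-- The preference of an agent with preference `r` after adding `x ≻ y`: the transitive closure of
`r` together with the pair `xy`. -/
def addPair (r : Pref α) (x y : α) : Pref α :=
  Relation.TransGen fun u v => r u v ∨ (u = x ∧ v = y)

theorem le_addPair (r : Pref α) (x y : α) : r ≤ addPair r x y :=
  fun _ _ huv => .single (.inl huv)

instance isTrans_addPair (r : Pref α) (x y : α) : IsTrans α (addPair r x y) :=
  inferInstanceAs (IsTrans α (Relation.TransGen _))

theorem mdStep_eq_self_or_addPair (P : Fin n → Pref α) {p : α × α} (hp : p.1 ≠ p.2) (i : Fin n) :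
    mdStep P p i = P i ∨
      ∃ x y, x ≠ y ∧ ¬ P i y x ∧ support P y x ≤ support P x y ∧
        mdStep P p i = addPair (P i) x y := by
  unfold mdStep
  split_ifs with hcomp hle
  · exact .inl rfl
  · exact .inr ⟨p.1, p.2, hp, fun h => hcomp (.inr h), hle, rfl⟩
  · exact .inr ⟨p.2, p.1, hp.symm, fun h => hcomp (.inl h), le_of_not_ge hle, rfl⟩

/-- `s` is a transitive extension of `r` that places no new alternative above `a`. For the
preferences `r` and `s` of an agent before and during majority dynamics, and `a` the Condorcet
winner, this is the invariant of the process. -/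
structure ExtendsBelow (a : α) (r s : Pref α) : Prop where
  le : r ≤ s
  isTrans : IsTrans α s
  above : ∀ b, s b a → r b a

theorem ExtendsBelow.refl (a : α) (r : Pref α) [IsTrans α r] : ExtendsBelow a r r :=
  ⟨le_rfl, ‹_›, fun _ => id⟩

theorem ExtendsBelow.addPair {a x y : α} {r s : Pref α} [IsOrderConnected α r]
    (h : ExtendsBelow a r s) (hyx : ¬ s y x) (hya : y ≠ a) :
    ExtendsBelow a r (addPair s x y) := by
  refine ⟨h.le.trans (le_addPair s x y), isTrans_addPair s x y, fun b hba => ?_⟩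
  induction hba using Relation.TransGen.head_induction_on with
  | single hca =>
    rcases hca with hca | ⟨-, hay⟩
    · exact h.above _ hca
    · exact absurd hay.symm hya
  | @head c d hcd _ hda =>
    rcases hcd with hcd | ⟨rfl, rfl⟩
    · exact h.above c (h.isTrans.trans c d a hcd (h.le d a hda))
    · have hdc : ¬ r d c := fun hr => hyx (h.le d c hr)
      exact (IsOrderConnected.conn d c a hda).resolve_left hdc

theorem CondorcetWinner.of_extendsBelow {P Q : Fin n → Pref α} {a : α}
    (ha : CondorcetWinner P a) (h : ∀ i, ExtendsBelow a (P i) (Q i)) : CondorcetWinner Q a :=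
  fun b hb => calc
    support Q b a ≤ support P b a := support_le_support fun i => (h i).above b
    _ < support P a b := ha b hb
    _ ≤ support Q a b := support_le_support fun i => (h i).le a b

theorem extendsBelow_mdStep {P Q : Fin n → Pref α} [∀ i, IsOrderConnected α (P i)] {a : α}
    (ha : CondorcetWinner P a) (h : ∀ i, ExtendsBelow a (P i) (Q i)) {p : α × α}
    (hp : p.1 ≠ p.2) (i : Fin n) : ExtendsBelow a (P i) (mdStep Q p i) := by
  have haQ : CondorcetWinner Q a := ha.of_extendsBelow h
  rcases mdStep_eq_self_or_addPair Q hp i with hstep | ⟨x, y, hxy, hyx, hle, hstep⟩ <;> rw [hstep]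
  · exact h i
  · exact (h i).addPair hyx (haQ.ne_of_support_le hxy hle)

theorem extendsBelow_md {P : Fin n → Pref α} [∀ i, IsTrans α (P i)]
    [∀ i, IsOrderConnected α (P i)] {a : α} (ha : CondorcetWinner P a) {σ : List (α × α)}
    (hσ : ∀ p ∈ σ, p.1 ≠ p.2) : ∀ i, ExtendsBelow a (P i) (MD σ P i) :=
  List.foldlRecOn (motive := fun Q => ∀ i, ExtendsBelow a (P i) (Q i)) σ mdStep
    (fun i => .refl a (P i)) fun Q hQ _ hp => extendsBelow_mdStep (Q := Q) ha hQ (hσ _ hp)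

theorem stmt_13_general {P : Fin n → Pref α} [∀ i, IsTrans α (P i)]
    [∀ i, IsOrderConnected α (P i)] {a : α} (ha : CondorcetWinner P a) {σ : List (α × α)}
    (hσ : ∀ p ∈ σ, p.1 ≠ p.2) : CondorcetWinner (MD σ P) a :=
  ha.of_extendsBelow (extendsBelow_md ha hσ)

end

/-- For profiles of strict weak orderings, majority dynamics preserves
Condorcet-winner identity. -/
theorem stmt_13 {n : ℕ} (P : Fin n → Pref A) (hP : ∀ i, IsPref (P i))
    (hswo : ∀ i, IsSWO (P i))
    (a : A) (ha : CondorcetWinner P a)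
    (σ : List (A × A)) (hσ : IsUpdateOrder σ) :
    CondorcetWinner (MD σ P) a := by
  have (i : Fin n) : IsTrans A (P i) := ⟨(hP i).2⟩
  have (i : Fin n) : IsOrderConnected A (P i) := (hswo i).isOrderConnected
  exact stmt_13_general ha hσ.1

end
end
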